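/- For every integer n ≥ 1, the number of totally symmetric self-complementary plane partitions inside a 2n×2n×2n box equals the number of tournaments on vertices 1,…,n satisfying the following condition on upsets: for all 1 ≤ u < v ≤ n, the number of w with u ≤ w ≤ v−2 such that the game between w and v−1 is an upset is at most the number of w with u ≤ w ≤ v−1 such that the game between w and v is an upset. -/

import Mathlib

open scoped Classical

/-- A plane partition in the box `{1,…,m}³`: a subset of the box that is downward
closed in each coordinate (within positive coordinates). -/
def IsPP (m : ℕ) (π : Set (ℕ × ℕ × ℕ)) : Prop :=
  (∀ p ∈ π, (1 ≤ p.1 ∧ p.1 ≤ m) ∧ (1 ≤ p.2.1 ∧ p.2.1 ≤ m) ∧ (1 ≤ p.2.2 ∧ p.2.2 ≤ m)) ∧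
  (∀ i j k i' j' k', (i, j, k) ∈ π → 1 ≤ i' → i' ≤ i → 1 ≤ j' → j' ≤ j →
    1 ≤ k' → k' ≤ k → (i', j', k') ∈ π)

/-- Totally symmetric: closed under all permutations of the three coordinates. -/
def IsTS (π : Set (ℕ × ℕ × ℕ)) : Prop :=
  ∀ i j k, (i, j, k) ∈ π →
    (i, k, j) ∈ π ∧ (j, i, k) ∈ π ∧ (j, k, i) ∈ π ∧ (k, i, j) ∈ π ∧ (k, j, i) ∈ π

/-- Self-complementary in the `2n`-box:
`(i,j,k) ∈ π ↔ (2n+1-i, 2n+1-j, 2n+1-k) ∉ π`. -/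
def IsSC (n : ℕ) (π : Set (ℕ × ℕ × ℕ)) : Prop :=
  ∀ i j k, 1 ≤ i → i ≤ 2 * n → 1 ≤ j → j ≤ 2 * n → 1 ≤ k → k ≤ 2 * n →
    ((i, j, k) ∈ π ↔ (2 * n + 1 - i, 2 * n + 1 - j, 2 * n + 1 - k) ∉ π)

/-- A totally symmetric self-complementary plane partition in a `2n×2n×2n` box. -/
def IsTSSCPP (n : ℕ) (π : Set (ℕ × ℕ × ℕ)) : Prop :=
  IsPP (2 * n) π ∧ IsTS π ∧ IsSC n π

/-- A tournament on vertices `1,…,n`, recorded by its upsets: `U i j = true` means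
the game between `i` and `j` (for `1 ≤ i < j ≤ n`) is an upset; `U` is normalized
to be `false` outside this index range. -/
def IsTournament (n : ℕ) (U : ℕ → ℕ → Bool) : Prop :=
  ∀ i j, ¬(1 ≤ i ∧ i < j ∧ j ≤ n) → U i j = false

/-- The upset condition: for all `1 ≤ u < v ≤ n`, the number of `w` with
`u ≤ w ≤ v-2` such that the game between `w` and `v-1` is an upset is at most the
number of `w` with `u ≤ w ≤ v-1` such that the game between `w` and `v` is an
upset. -/
def UpsetCond (n : ℕ) (U : ℕ → ℕ → Bool) : Prop :=
  ∀ u v, 1 ≤ u → u < v → v ≤ n →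
    ((Finset.Icc u (v - 2)).filter (fun w => U w (v - 1) = true)).card ≤
      ((Finset.Icc u (v - 1)).filter (fun w => U w v = true)).card

/-- The array of partial upset counts: `h u v` plays the role of the number of `w ≥ u` that
upset against `v`. -/
structure IsCountArray (n : ℕ) (h : ℕ → ℕ → ℕ) : Prop where
  eq_zero : ∀ u v, ¬(1 ≤ u ∧ u < v ∧ v ≤ n) → h u v = 0
  anti : ∀ u v, 1 ≤ u → h (u + 1) v ≤ h u v
  le_succ : ∀ u v, 1 ≤ u → h u v ≤ h (u + 1) v + 1
  mono : ∀ u v, 1 ≤ u → v + 1 ≤ n → h u v ≤ h u (v + 1)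

/-! ### Tournaments and count arrays -/

/-- The number of `w ∈ [u, v)` such that the game between `w` and `v` is an upset. -/
def upsetCount (U : ℕ → ℕ → Bool) (u v : ℕ) : ℕ :=
  if 1 ≤ u then ((Finset.Ico u v).filter (fun w => U w v = true)).card else 0

lemma upsetCount_eq_zero_of_le (U : ℕ → ℕ → Bool) {u v : ℕ} (h : v ≤ u) :
    upsetCount U u v = 0 := by
  simp [upsetCount, Finset.Ico_eq_empty_of_le h]

lemma upsetCount_eq_succ (U : ℕ → ℕ → Bool) {u v : ℕ} (hu : 1 ≤ u) (huv : u < v) :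
    upsetCount U u v = upsetCount U (u + 1) v + if U u v = true then 1 else 0 := by
  have hI : Finset.Ico u v = insert u (Finset.Ico (u + 1) v) := by
    ext x; simp only [Finset.mem_Ico, Finset.mem_insert]; omega
  simp only [upsetCount, hu, if_true, hI, Finset.filter_insert, Nat.le_add_left]
  split_ifs with hU
  · rw [Finset.card_insert_of_notMem (by simp)]
  · rfl

lemma isCountArray_upsetCount {n : ℕ} {U : ℕ → ℕ → Bool} (hT : IsTournament n U)
    (hU : UpsetCond n U) : IsCountArray n (upsetCount U) where
  eq_zero u v h := by
    unfold upsetCount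
    split_ifs with hu
    · rw [Finset.card_eq_zero, Finset.filter_eq_empty_iff]
      intro w hw
      rw [Finset.mem_Ico] at hw
      rw [hT w v (by omega)]
      simp
    · rfl
  anti u v hu := by
    rcases lt_or_ge u v with huv | huv
    · rw [upsetCount_eq_succ U hu huv]; omega
    · rw [upsetCount_eq_zero_of_le U (by omega : v ≤ u + 1)]; omega
  le_succ u v hu := by
    rcases lt_or_ge u v with huv | huv
    · rw [upsetCount_eq_succ U hu huv]; split_ifs <;> omega
    · rw [upsetCount_eq_zero_of_le U huv]; omega
  mono u v hu hv := by
    rcases lt_or_ge v u with huv | huv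
    · rw [upsetCount_eq_zero_of_le U huv.le]; omega
    · have key := hU u (v + 1) hu (by omega) hv
      have h₁ : Finset.Icc u (v + 1 - 2) = Finset.Ico u v := by
        ext x; simp only [Finset.mem_Ico, Finset.mem_Icc]; omega
      have h₂ : Finset.Icc u (v + 1 - 1) = Finset.Ico u (v + 1) := by
        ext x; simp only [Finset.mem_Ico, Finset.mem_Icc]; omega
      rw [h₁, h₂, Nat.add_sub_cancel] at key
      simpa only [upsetCount, hu, if_true] using key

/-- The tournament whose upsets are the descents of a count array. -/
def descentTournament (h : ℕ → ℕ → ℕ) (u v : ℕ) : Bool :=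
  decide (h u v = h (u + 1) v + 1)

lemma upsetCount_descentTournament {n : ℕ} {h : ℕ → ℕ → ℕ} (hh : IsCountArray n h) :
    upsetCount (descentTournament h) = h := by
  funext u v
  rcases Nat.eq_zero_or_pos u with rfl | hu
  · rw [hh.eq_zero 0 v (by omega)]; simp [upsetCount]
  rcases le_total v u with huv | huv
  · rw [upsetCount_eq_zero_of_le _ huv, hh.eq_zero u v (by omega)]
  induction huv using Nat.decreasingInduction with
  | of_succ u huv ih =>
    rw [upsetCount_eq_succ _ hu huv, ih (by omega)]
    have h₁ := hh.anti u v hu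
    have h₂ := hh.le_succ u v hu
    simp only [descentTournament, decide_eq_true_eq]
    split_ifs <;> omega
  | self => rw [upsetCount_eq_zero_of_le _ le_rfl, hh.eq_zero v v (by omega)]

lemma isTournament_descentTournament {n : ℕ} {h : ℕ → ℕ → ℕ} (hh : IsCountArray n h) :
    IsTournament n (descentTournament h) := by
  intro i j hij
  simp [descentTournament, hh.eq_zero i j hij]

lemma upsetCond_descentTournament {n : ℕ} {h : ℕ → ℕ → ℕ} (hh : IsCountArray n h) :
    UpsetCond n (descentTournament h) := by
  intro u v hu huv hv
  obtain ⟨v, rfl⟩ : ∃ v', v = v' + 1 := ⟨v - 1, by omega⟩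
  have key := hh.mono u v hu hv
  rw [← upsetCount_descentTournament hh] at key
  have h₁ : Finset.Icc u (v + 1 - 2) = Finset.Ico u v := by
    ext x; simp only [Finset.mem_Ico, Finset.mem_Icc]; omega
  have h₂ : Finset.Icc u (v + 1 - 1) = Finset.Ico u (v + 1) := by
    ext x; simp only [Finset.mem_Ico, Finset.mem_Icc]; omega
  rw [h₁, h₂, Nat.add_sub_cancel]
  simpa only [upsetCount, hu, if_true] using key

lemma descentTournament_upsetCount {n : ℕ} {U : ℕ → ℕ → Bool} (hT : IsTournament n U)
    (hU : UpsetCond n U) : descentTournament (upsetCount U) = U := by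
  funext u v
  by_cases h : 1 ≤ u ∧ u < v ∧ v ≤ n
  · rw [descentTournament, upsetCount_eq_succ U h.1 h.2.1]
    cases U u v <;> simp
  · rw [hT u v h, isTournament_descentTournament (isCountArray_upsetCount hT hU) u v h]

/-- Tournaments satisfying the upset condition correspond to count arrays. -/
def tournamentEquiv (n : ℕ) :
    {U : ℕ → ℕ → Bool // IsTournament n U ∧ UpsetCond n U} ≃
      {h : ℕ → ℕ → ℕ // IsCountArray n h} where
  toFun U := ⟨upsetCount U.1, isCountArray_upsetCount U.2.1 U.2.2⟩
  invFun h := ⟨descentTournament h.1, isTournament_descentTournament h.2,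
    upsetCond_descentTournament h.2⟩
  left_inv U := Subtype.ext (descentTournament_upsetCount U.2.1 U.2.2)
  right_inv h := Subtype.ext (upsetCount_descentTournament h.2)

/-! ### Plane partitions and count arrays -/

/-- An upward closed subset of `[u, n]` is a final segment determined by its cardinality. -/
lemma mem_iff_of_upward_closed {u n : ℕ} (P : ℕ → Prop) [DecidablePred P]
    (hP : ∀ j, u ≤ j → j + 1 ≤ n → P j → P (j + 1)) {j : ℕ} (huj : u ≤ j) (hjn : j ≤ n) :
    P j ↔ n < j + ((Finset.Icc u n).filter P).card := by
  have hmono : ∀ a b, u ≤ a → a ≤ b → b ≤ n → P a → P b := by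
    intro a b ha hab
    induction b, hab using Nat.le_induction with
    | base => exact fun _ h => h
    | succ b hab ih => exact fun hb h => hP b (by omega) hb (ih (by omega) h)
  constructor
  · intro h
    have hsub : Finset.Icc j n ⊆ (Finset.Icc u n).filter P := by
      intro x hx
      rw [Finset.mem_Icc] at hx
      rw [Finset.mem_filter, Finset.mem_Icc]
      exact ⟨⟨by omega, hx.2⟩, hmono j x huj hx.1 hx.2 h⟩
    have := Finset.card_le_card hsub
    rw [Nat.card_Icc] at this
    omega
  · intro h
    by_contra hj
    have hsub : (Finset.Icc u n).filter P ⊆ Finset.Icc (j + 1) n := by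
      intro x hx
      rw [Finset.mem_filter, Finset.mem_Icc] at hx
      rw [Finset.mem_Icc]
      refine ⟨?_, hx.1.2⟩
      by_contra hxj
      exact hj (hmono x j hx.1.1 (by omega) hjn hx.2)
    have := Finset.card_le_card hsub
    rw [Nat.card_Icc] at this
    omega

/-- The number of cells missing from `π` on the `u`-th diagonal at height `n + v`. -/
noncomputable def diagCount (n : ℕ) (π : Set (ℕ × ℕ × ℕ)) (u v : ℕ) : ℕ :=
  if 1 ≤ u ∧ v ≤ n then
    ((Finset.Icc u n).filter (fun j => (j + 1 - u, j, n + v) ∉ π)).card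
  else 0

lemma diagCount_le (n : ℕ) (π : Set (ℕ × ℕ × ℕ)) (u v : ℕ) :
    diagCount n π u v ≤ n + 1 - u := by
  unfold diagCount
  split_ifs
  · exact (Finset.card_filter_le _ _).trans (by rw [Nat.card_Icc])
  · omega

lemma notMem_iff_diagCount {n : ℕ} {π : Set (ℕ × ℕ × ℕ)} (hπ : IsTSSCPP n π) {u v j : ℕ}
    (hu : 1 ≤ u) (hv₁ : 1 ≤ v) (hv : v ≤ n) (huj : u ≤ j) (hj : j ≤ n) :
    (j + 1 - u, j, n + v) ∉ π ↔ n < j + diagCount n π u v := by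
  rw [diagCount, if_pos ⟨hu, hv⟩]
  refine mem_iff_of_upward_closed (fun j => (j + 1 - u, j, n + v) ∉ π) ?_ huj hj
  intro j hj₁ hj₂ h h'
  exact h (hπ.1.2 _ _ _ _ _ _ h' (by omega) (by omega) (by omega) (by omega) (by omega) le_rfl)

lemma IsTSSCPP.staircase_mem {n : ℕ} {π : Set (ℕ × ℕ × ℕ)} (hπ : IsTSSCPP n π) {u : ℕ}
    (hu : 1 ≤ u) (hun : u ≤ n) : (n + 1 - u, n, n + u) ∈ π := by
  by_contra h
  have h₁ := hπ.2.2 (n + 1 - u) n (n + u) (by omega) (by omega) (by omega) (by omega)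
    (by omega) (by omega)
  have h₂ : (2 * n + 1 - (n + 1 - u), 2 * n + 1 - n, 2 * n + 1 - (n + u)) ∈ π := by
    by_contra h₃
    exact h (h₁.2 h₃)
  have h₃ := (hπ.2.1 _ _ _ h₂).2.2.2.2
  exact h (hπ.1.2 _ _ _ _ _ _ h₃ (by omega) (by omega) (by omega) (by omega) (by omega)
    (by omega))

lemma IsTSSCPP.cube_mem {n : ℕ} {π : Set (ℕ × ℕ × ℕ)} (hπ : IsTSSCPP n π) {i j k : ℕ}
    (hi : 1 ≤ i) (hi' : i ≤ n) (hj : 1 ≤ j) (hj' : j ≤ n) (hk : 1 ≤ k) (hk' : k ≤ n) :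
    (i, j, k) ∈ π := by
  have hn : (n, n, n + 1) ∈ π := by
    simpa using hπ.staircase_mem (u := 1) le_rfl (by omega)
  exact hπ.1.2 _ _ _ _ _ _ hn hi hi' hj hj' hk (by omega)

lemma isCountArray_diagCount {n : ℕ} {π : Set (ℕ × ℕ × ℕ)} (hπ : IsTSSCPP n π) :
    IsCountArray n (diagCount n π) := by
  have hzero : ∀ u v, ¬(1 ≤ u ∧ u < v ∧ v ≤ n) → diagCount n π u v = 0 := by
    intro u v h
    unfold diagCount
    split_ifs with huv
    · rw [Finset.card_eq_zero, Finset.filter_eq_empty_iff]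
      intro j hj
      rw [Finset.mem_Icc] at hj
      rw [not_not]
      exact hπ.1.2 _ _ _ _ _ _ (hπ.staircase_mem huv.1 (by omega)) (by omega) (by omega)
        (by omega) (by omega) (by omega) (by omega)
    · rfl
  refine ⟨hzero, fun u v hu => ?_, fun u v hu => ?_, fun u v hu hv => ?_⟩
  · by_contra hlt
    by_cases hr : 1 ≤ u + 1 ∧ u + 1 < v ∧ v ≤ n
    · have hle := diagCount_le n π (u + 1) v
      have hj₁ : u + 1 ≤ n - diagCount n π u v := by omega
      have h₁ := (notMem_iff_diagCount hπ (by omega) (by omega) hr.2.2 hj₁ (by omega)).2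
        (by omega)
      have h₂ := (notMem_iff_diagCount hπ hu (by omega) hr.2.2
        (by omega : u ≤ n - diagCount n π u v) (by omega)).1 fun h =>
          h₁ (hπ.1.2 _ _ _ _ _ _ h (by omega) (by omega) (by omega) le_rfl (by omega) le_rfl)
      omega
    · have := hzero (u + 1) v hr
      omega
  · by_contra hlt
    by_cases hr : 1 ≤ u ∧ u < v ∧ v ≤ n
    · have hle := diagCount_le n π u v
      have hj₁ : u ≤ n + 1 - diagCount n π u v := by omega
      have h₁ := (notMem_iff_diagCount hπ hu (by omega) hr.2.2 hj₁ (by omega)).2 (by omega)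
      have h₂ := (notMem_iff_diagCount hπ (by omega : 1 ≤ u + 1) (by omega) hr.2.2
        (by omega : u + 1 ≤ n + 1 - diagCount n π u v + 1) (by omega)).1 fun h =>
          h₁ (hπ.1.2 _ _ _ _ _ _ h (by omega) (by omega) (by omega) (by omega) (by omega) le_rfl)
      omega
    · have := hzero u v hr
      omega
  · rcases Nat.eq_zero_or_pos v with rfl | hv₀
    · rw [hzero u 0 (by omega)]; omega
    · rw [diagCount, diagCount, if_pos ⟨hu, by omega⟩, if_pos ⟨hu, hv⟩]
      refine Finset.card_le_card fun j hj => ?_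
      rw [Finset.mem_filter, Finset.mem_Icc] at hj ⊢
      exact ⟨hj.1, fun h => hj.2 (hπ.1.2 _ _ _ _ _ _ h (by omega) le_rfl (by omega) le_rfl
        (by omega) (by omega))⟩

/-- The cell `(i, j, n + v)`, with `i, j ≤ n`, is missing from the plane partition encoded by
the count array `h`. -/
def IsMissing (n : ℕ) (h : ℕ → ℕ → ℕ) (i j v : ℕ) : Prop :=
  n < max i j + h (max i j - min i j + 1) v

lemma isMissing_comm {n : ℕ} {h : ℕ → ℕ → ℕ} {i j v : ℕ} :
    IsMissing n h i j v ↔ IsMissing n h j i v := by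
  rw [IsMissing, IsMissing, max_comm, min_comm]

lemma IsMissing.succ_left {n : ℕ} {h : ℕ → ℕ → ℕ} (hh : IsCountArray n h) {i j v : ℕ}
    (hm : IsMissing n h i j v) : IsMissing n h (i + 1) j v := by
  unfold IsMissing at *
  rcases lt_or_ge i j with hij | hij
  · have h₁ := hh.anti (j - (i + 1) + 1) v (by omega)
    rw [max_eq_right hij.le, min_eq_left hij.le] at hm
    rw [max_eq_right (by omega), min_eq_left (by omega)]
    rw [show j - (i + 1) + 1 + 1 = j - i + 1 by omega] at h₁
    omega
  · have h₁ := hh.le_succ (i - j + 1) v (by omega)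
    rw [max_eq_left hij, min_eq_right hij] at hm
    rw [max_eq_left (by omega), min_eq_right (by omega)]
    rw [show i - j + 1 + 1 = i + 1 - j + 1 by omega] at h₁
    omega

lemma IsMissing.succ_height {n : ℕ} {h : ℕ → ℕ → ℕ} (hh : IsCountArray n h) {i j v : ℕ}
    (hv : v + 1 ≤ n) (hm : IsMissing n h i j v) : IsMissing n h i j (v + 1) := by
  have := hh.mono (max i j - min i j + 1) v (by omega) hv
  unfold IsMissing at *
  omega

lemma IsMissing.lt_of_boundary {n : ℕ} {h : ℕ → ℕ → ℕ} (hh : IsCountArray n h) {j v : ℕ}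
    (hj : j ≤ n) (hm : IsMissing n h n j v) : n - j + 1 < v := by
  unfold IsMissing at hm
  rw [max_eq_left hj, min_eq_right hj] at hm
  by_contra hlt
  rw [hh.eq_zero (n - j + 1) v (by omega)] at hm
  omega

/-- Membership in the plane partition encoded by a count array, split according to which
coordinates exceed `n`. -/
def IsCell (n : ℕ) (h : ℕ → ℕ → ℕ) (i j k : ℕ) : Prop :=
  (1 ≤ i ∧ i ≤ 2 * n) ∧ (1 ≤ j ∧ j ≤ 2 * n) ∧ (1 ≤ k ∧ k ≤ 2 * n) ∧
    ((i ≤ n ∧ j ≤ n ∧ k ≤ n) ∨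
      (i ≤ n ∧ j ≤ n ∧ n < k ∧ ¬IsMissing n h i j (k - n)) ∨
      (i ≤ n ∧ n < j ∧ k ≤ n ∧ ¬IsMissing n h i k (j - n)) ∨
      (n < i ∧ j ≤ n ∧ k ≤ n ∧ ¬IsMissing n h j k (i - n)) ∨
      (i ≤ n ∧ n < j ∧ n < k ∧ IsMissing n h (2 * n + 1 - j) (2 * n + 1 - k) (n + 1 - i)) ∨
      (n < i ∧ j ≤ n ∧ n < k ∧ IsMissing n h (2 * n + 1 - i) (2 * n + 1 - k) (n + 1 - j)) ∨
      (n < i ∧ n < j ∧ k ≤ n ∧ IsMissing n h (2 * n + 1 - i) (2 * n + 1 - j) (n + 1 - k)))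

lemma IsCell.swap_left {n : ℕ} {h : ℕ → ℕ → ℕ} {i j k : ℕ} (hc : IsCell n h i j k) :
    IsCell n h j i k := by
  obtain ⟨hi, hj, hk, hc⟩ := hc
  refine ⟨hj, hi, hk, ?_⟩
  rw [isMissing_comm (i := j) (j := i),
    isMissing_comm (i := 2 * n + 1 - j) (j := 2 * n + 1 - i)]
  rcases hc with hc | hc | hc | hc | hc | hc | hc <;>
    simp only [hc, and_self, not_false_eq_true, true_or, or_true]

lemma IsCell.swap_right {n : ℕ} {h : ℕ → ℕ → ℕ} {i j k : ℕ} (hc : IsCell n h i j k) :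
    IsCell n h i k j := by
  obtain ⟨hi, hj, hk, hc⟩ := hc
  refine ⟨hi, hk, hj, ?_⟩
  rw [isMissing_comm (i := k) (j := j),
    isMissing_comm (i := 2 * n + 1 - k) (j := 2 * n + 1 - j)]
  rcases hc with hc | hc | hc | hc | hc | hc | hc <;>
    simp only [hc, and_self, not_false_eq_true, true_or, or_true]

lemma isCell_compl_iff {n : ℕ} {h : ℕ → ℕ → ℕ} {i j k : ℕ} (hi : 1 ≤ i) (hi' : i ≤ 2 * n)
    (hj : 1 ≤ j) (hj' : j ≤ 2 * n) (hk : 1 ≤ k) (hk' : k ≤ 2 * n) :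
    IsCell n h i j k ↔ ¬IsCell n h (2 * n + 1 - i) (2 * n + 1 - j) (2 * n + 1 - k) := by
  have hc : ∀ a, 1 ≤ a → a ≤ 2 * n → (1 ≤ 2 * n + 1 - a ∧ 2 * n + 1 - a ≤ 2 * n) ∧
      (2 * n + 1 - a ≤ n ↔ n < a) ∧ (n < 2 * n + 1 - a ↔ a ≤ n) ∧
      2 * n + 1 - (2 * n + 1 - a) = a ∧ 2 * n + 1 - a - n = n + 1 - a ∧
      (n < a → n + 1 - (2 * n + 1 - a) = a - n) := by
    intro a h₁ h₂
    omega
  obtain ⟨i₁, i₂, i₃, i₄, i₅, i₆⟩ := hc i hi hi'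
  obtain ⟨j₁, j₂, j₃, j₄, j₅, j₆⟩ := hc j hj hj'
  obtain ⟨k₁, k₂, k₃, k₄, k₅, k₆⟩ := hc k hk hk'
  simp only [IsCell, i₁, i₂, i₃, i₄, i₅, j₁, j₂, j₃, j₄, j₅, k₁, k₂, k₃, k₄, k₅,
    hi, hi', hj, hj', hk, hk', true_and]
  rcases le_or_gt i n with hin | hin <;> rcases le_or_gt j n with hjn | hjn <;>
    rcases le_or_gt k n with hkn | hkn <;>
    simp [hin, hjn, hkn, i₆, j₆, k₆, not_lt.2, not_le.2]

lemma IsCell.pred_left {n : ℕ} {h : ℕ → ℕ → ℕ} (hh : IsCountArray n h) {i j k : ℕ}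
    (hi : 1 ≤ i) (hc : IsCell n h (i + 1) j k) : IsCell n h i j k := by
  have mixed : ∀ {j k}, j ≤ n → n < k → IsCell n h (i + 1) j k → IsCell n h i j k := by
    intro j k hjn hkn hc
    obtain ⟨hi', hj, hk, hc⟩ := hc
    refine ⟨by omega, hj, hk, ?_⟩
    rcases lt_trichotomy i n with hin | rfl | hin
    · have hm : ¬IsMissing n h (i + 1) j (k - n) := by
        rcases hc with hc | hc | hc | hc | hc | hc | hc <;> first | exact hc.2.2.2 | omega
      exact Or.inr (Or.inl ⟨hin.le, hjn, hkn, fun h' => hm (h'.succ_left hh)⟩)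
    · have hm : IsMissing i h (2 * i + 1 - (i + 1)) (2 * i + 1 - k) (i + 1 - j) := by
        rcases hc with hc | hc | hc | hc | hc | hc | hc <;> first | exact hc.2.2.2 | omega
      rw [show 2 * i + 1 - (i + 1) = i by omega] at hm
      have h₁ := hm.lt_of_boundary hh (by omega)
      refine Or.inr (Or.inl ⟨le_rfl, hjn, hkn, fun h' => ?_⟩)
      have h₂ := h'.lt_of_boundary hh hjn
      omega
    · have hm : IsMissing n h (2 * n + 1 - (i + 1)) (2 * n + 1 - k) (n + 1 - j) := by
        rcases hc with hc | hc | hc | hc | hc | hc | hc <;> first | exact hc.2.2.2 | omega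
      have h₁ := hm.succ_left hh
      rw [show 2 * n + 1 - (i + 1) + 1 = 2 * n + 1 - i by omega] at h₁
      exact Or.inr (Or.inr (Or.inr (Or.inr (Or.inr (Or.inl ⟨hin, hjn, hkn, h₁⟩)))))
  rcases le_or_gt j n with hjn | hjn <;> rcases le_or_gt k n with hkn | hkn
  · obtain ⟨hi', hj, hk, hc⟩ := hc
    refine ⟨by omega, hj, hk, ?_⟩
    rcases le_or_gt i n with hin | hin
    · exact Or.inl ⟨hin, hjn, hkn⟩
    · have hm : ¬IsMissing n h j k (i + 1 - n) := by
        rcases hc with hc | hc | hc | hc | hc | hc | hc <;> first | exact hc.2.2.2 | omega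
      refine Or.inr (Or.inr (Or.inr (Or.inl ⟨hin, hjn, hkn, fun h' => hm ?_⟩)))
      have h₁ := h'.succ_height hh (by omega)
      rwa [show i - n + 1 = i + 1 - n by omega] at h₁
  · exact mixed hjn hkn hc
  · exact (mixed hkn hjn hc.swap_right).swap_right
  · obtain ⟨hi', hj, hk, hc⟩ := hc
    have hm : i + 1 ≤ n ∧ IsMissing n h (2 * n + 1 - j) (2 * n + 1 - k) (n + 1 - (i + 1)) := by
      rcases hc with hc | hc | hc | hc | hc | hc | hc <;>
        first | exact ⟨hc.1, hc.2.2.2⟩ | omega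
    refine ⟨by omega, hj, hk, ?_⟩
    have h₁ := hm.2.succ_height hh (by omega)
    rw [show n + 1 - (i + 1) + 1 = n + 1 - i by omega] at h₁
    exact Or.inr (Or.inr (Or.inr (Or.inr (Or.inl ⟨by omega, hjn, hkn, h₁⟩))))

lemma IsCell.of_le_left {n : ℕ} {h : ℕ → ℕ → ℕ} (hh : IsCountArray n h) {i i' j k : ℕ}
    (hi : 1 ≤ i') (hle : i' ≤ i) (hc : IsCell n h i j k) : IsCell n h i' j k := by
  induction i, hle using Nat.le_induction with
  | base => exact hc
  | succ i hle ih => exact ih (hc.pred_left hh (by omega))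

/-- The plane partition encoded by a count array. -/
def cellSet (n : ℕ) (h : ℕ → ℕ → ℕ) : Set (ℕ × ℕ × ℕ) :=
  {p | IsCell n h p.1 p.2.1 p.2.2}

lemma isTSSCPP_cellSet {n : ℕ} {h : ℕ → ℕ → ℕ} (hh : IsCountArray n h) :
    IsTSSCPP n (cellSet n h) := by
  refine ⟨⟨fun p hp => ⟨hp.1, hp.2.1, hp.2.2.1⟩, ?_⟩, ?_, ?_⟩
  · intro i j k i' j' k' hc hi hi' hj hj' hk hk'
    have h₁ : IsCell n h i' j k := IsCell.of_le_left hh hi hi' hc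
    have h₂ : IsCell n h j' i' k := h₁.swap_left.of_le_left hh hj hj'
    have h₃ : IsCell n h k' j' i' :=
      h₂.swap_right.swap_left.of_le_left hh hk hk'
    exact h₃.swap_right.swap_left.swap_right
  · intro i j k hc
    have hc : IsCell n h i j k := hc
    exact ⟨hc.swap_right, hc.swap_left, hc.swap_left.swap_right, hc.swap_right.swap_left,
      hc.swap_left.swap_right.swap_left⟩
  · intro i j k hi hi' hj hj' hk hk'
    exact isCell_compl_iff hi hi' hj hj' hk hk'

lemma mem_cellSet_iff {n : ℕ} {h : ℕ → ℕ → ℕ} {i j v : ℕ} (hi : 1 ≤ i) (hi' : i ≤ n)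
    (hj : 1 ≤ j) (hj' : j ≤ n) (hv : 1 ≤ v) (hv' : v ≤ n) :
    (i, j, n + v) ∈ cellSet n h ↔ ¬IsMissing n h i j v := by
  have h₀ : n + v - n = v := by omega
  simp only [cellSet, Set.mem_ofPred_eq, IsCell, h₀]
  constructor
  · rintro ⟨-, -, -, hc⟩
    rcases hc with hc | hc | hc | hc | hc | hc | hc <;> first | exact hc.2.2.2 | omega
  · intro hm
    exact ⟨by omega, by omega, by omega, Or.inr (Or.inl ⟨hi', hj', by omega, hm⟩)⟩

lemma IsCountArray.le_sub {n : ℕ} {h : ℕ → ℕ → ℕ} (hh : IsCountArray n h) {u v : ℕ}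
    (hu : 1 ≤ u) (huv : u ≤ v) : h u v ≤ v - u := by
  induction huv using Nat.decreasingInduction with
  | of_succ u huv ih =>
    have h₁ := hh.le_succ u v hu
    have h₂ := ih (by omega)
    omega
  | self => rw [hh.eq_zero v v (by omega)]; omega

lemma diagCount_cellSet {n : ℕ} {h : ℕ → ℕ → ℕ} (hh : IsCountArray n h) :
    diagCount n (cellSet n h) = h := by
  funext u v
  by_cases hr : 1 ≤ u ∧ u < v ∧ v ≤ n
  · obtain ⟨hu, huv, hv⟩ := hr
    have hle := hh.le_sub hu huv.le
    have hf : (Finset.Icc u n).filter (fun j => (j + 1 - u, j, n + v) ∉ cellSet n h) =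
        Finset.Icc (n + 1 - h u v) n := by
      ext j
      rw [Finset.mem_filter, Finset.mem_Icc, Finset.mem_Icc]
      constructor
      · rintro ⟨hj, hm⟩
        rw [mem_cellSet_iff (by omega) (by omega) (by omega) hj.2 (by omega) hv, not_not,
          IsMissing, max_eq_right (by omega), min_eq_left (by omega),
          show j - (j + 1 - u) + 1 = u by omega] at hm
        omega
      · intro hj
        refine ⟨by omega, ?_⟩
        rw [mem_cellSet_iff (by omega) (by omega) (by omega) hj.2 (by omega) hv, not_not,
          IsMissing, max_eq_right (by omega), min_eq_left (by omega),
          show j - (j + 1 - u) + 1 = u by omega]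
        omega
    rw [diagCount, if_pos ⟨hu, hv⟩, hf, Nat.card_Icc]
    omega
  · rw [hh.eq_zero u v hr, (isCountArray_diagCount (isTSSCPP_cellSet hh)).eq_zero u v hr]

lemma IsTS.mem_iff {π : Set (ℕ × ℕ × ℕ)} (hπ : IsTS π) (i j k : ℕ) :
    ((i, j, k) ∈ π ↔ (j, i, k) ∈ π) ∧ ((i, j, k) ∈ π ↔ (i, k, j) ∈ π) :=
  ⟨⟨fun h => (hπ _ _ _ h).2.1, fun h => (hπ _ _ _ h).2.1⟩,
    ⟨fun h => (hπ _ _ _ h).1, fun h => (hπ _ _ _ h).1⟩⟩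

/-- A totally symmetric self-complementary plane partition is determined by its cells with
exactly one coordinate exceeding `n`, which may be taken to be the last one. -/
lemma IsTSSCPP.subset_of_forall {n : ℕ} {π ρ : Set (ℕ × ℕ × ℕ)} (hπ : IsTSSCPP n π)
    (hρ : IsTSSCPP n ρ)
    (H : ∀ i j v, 1 ≤ i → i ≤ j → j ≤ n → 1 ≤ v → v ≤ n →
      ((i, j, n + v) ∈ π ↔ (i, j, n + v) ∈ ρ)) : π ⊆ ρ := by
  have H₁ : ∀ i j k, 1 ≤ i → i ≤ n → 1 ≤ j → j ≤ n → n < k → k ≤ 2 * n →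
      ((i, j, k) ∈ π ↔ (i, j, k) ∈ ρ) := by
    intro i j k hi hi' hj hj' hk hk'
    obtain ⟨v, rfl⟩ : ∃ v, k = n + v := ⟨k - n, by omega⟩
    rcases le_total i j with hij | hij
    · exact H i j v hi hij hj' (by omega) (by omega)
    · rw [(hπ.2.1.mem_iff i j _).1, (hρ.2.1.mem_iff i j _).1]
      exact H j i v hj hij hi' (by omega) (by omega)
  have H₂ : ∀ i j k, i ≤ j → j ≤ k → (i, j, k) ∈ π → (i, j, k) ∈ ρ := by
    intro i j k hij hjk h
    obtain ⟨hi, hj, hk⟩ := hπ.1.1 _ h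
    simp only at hi hj hk
    rcases le_or_gt k n with hkn | hkn
    · exact hρ.cube_mem hi.1 (by omega) hj.1 (by omega) hk.1 hkn
    rcases le_or_gt j n with hjn | hjn
    · exact (H₁ i j k hi.1 (by omega) hj.1 hjn hkn hk.2).1 h
    rw [hπ.2.2 i j k hi.1 hi.2 hj.1 hj.2 hk.1 hk.2] at h
    rw [hρ.2.2 i j k hi.1 hi.2 hj.1 hj.2 hk.1 hk.2]
    rcases le_or_gt i n with hin | hin
    · intro h'
      rw [(hρ.2.1.mem_iff _ _ _).1, (hρ.2.1.mem_iff _ _ _).2, (hρ.2.1.mem_iff _ _ _).1] at h'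
      rw [(hπ.2.1.mem_iff _ _ _).1, (hπ.2.1.mem_iff _ _ _).2, (hπ.2.1.mem_iff _ _ _).1] at h
      exact h ((H₁ _ _ _ (by omega) (by omega) (by omega) (by omega) (by omega)
        (by omega)).2 h')
    · exact absurd (hπ.cube_mem (by omega) (by omega) (by omega) (by omega) (by omega)
        (by omega)) h
  rintro ⟨i, j, k⟩ h
  have hp := hπ.2.1 i j k h
  rcases le_total i j with hij | hij <;> rcases le_total j k with hjk | hjk <;>
    rcases le_total i k with hik | hik
  · exact H₂ i j k hij hjk h
  · exact H₂ i j k hij hjk h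
  · exact (hρ.2.1 _ _ _ (H₂ i k j hik hjk hp.1)).1
  · exact (hρ.2.1 _ _ _ (H₂ k i j hik hij hp.2.2.2.1)).2.2.1
  · exact (hρ.2.1 _ _ _ (H₂ j i k hij hik hp.2.1)).2.1
  · exact (hρ.2.1 _ _ _ (H₂ j k i hjk hik hp.2.2.1)).2.2.2.1
  · exact (hρ.2.1 _ _ _ (H₂ k j i hjk hij hp.2.2.2.2)).2.2.2.2
  · exact (hρ.2.1 _ _ _ (H₂ k j i hjk hij hp.2.2.2.2)).2.2.2.2

lemma IsTSSCPP.mem_iff_of_diagCount {n : ℕ} {π : Set (ℕ × ℕ × ℕ)} (hπ : IsTSSCPP n π)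
    {i j v : ℕ} (hi : 1 ≤ i) (hij : i ≤ j) (hj : j ≤ n) (hv : 1 ≤ v) (hv' : v ≤ n) :
    (i, j, n + v) ∈ π ↔ (i, j, n + v) ∈ cellSet n (diagCount n π) := by
  have h₁ := notMem_iff_diagCount hπ (by omega : 1 ≤ j - i + 1) hv hv' (by omega) hj
  rw [show j + 1 - (j - i + 1) = i by omega] at h₁
  rw [mem_cellSet_iff hi (by omega) (by omega) hj hv hv', IsMissing, max_eq_right hij,
    min_eq_left hij, ← h₁, not_not]

lemma cellSet_diagCount {n : ℕ} {π : Set (ℕ × ℕ × ℕ)} (hπ : IsTSSCPP n π) :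
    cellSet n (diagCount n π) = π := by
  have hρ := isTSSCPP_cellSet (isCountArray_diagCount hπ)
  refine Set.Subset.antisymm (hρ.subset_of_forall hπ ?_) (hπ.subset_of_forall hρ ?_)
  · exact fun i j v hi hij hj hv hv' => (hπ.mem_iff_of_diagCount hi hij hj hv hv').symm
  · exact fun i j v hi hij hj hv hvn => hπ.mem_iff_of_diagCount hi hij hj hv hvn

/-- Totally symmetric self-complementary plane partitions correspond to count arrays. -/
noncomputable def planePartitionEquiv (n : ℕ) :
    {π : Set (ℕ × ℕ × ℕ) // IsTSSCPP n π} ≃ {h : ℕ → ℕ → ℕ // IsCountArray n h} where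
  toFun π := ⟨diagCount n π.1, isCountArray_diagCount π.2⟩
  invFun h := ⟨cellSet n h.1, isTSSCPP_cellSet h.2⟩
  left_inv π := Subtype.ext (cellSet_diagCount π.2)
  right_inv h := Subtype.ext (diagCount_cellSet h.2)

/-- The number of TSSCPPs inside a `2n×2n×2n` box equals the number of
tournaments on `1,…,n` satisfying the upset condition. -/
theorem stmt19 (n : ℕ) (hn : 1 ≤ n) :
    Nat.card {π : Set (ℕ × ℕ × ℕ) // IsTSSCPP n π} =
      Nat.card {U : ℕ → ℕ → Bool // IsTournament n U ∧ UpsetCond n U} := by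
  exact Nat.card_congr ((planePartitionEquiv n).trans (tournamentEquiv n).symm)
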